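/- arXiv:2408.15592 — 3 statements merged into one kernel-verified Lean document; each statement's English description precedes it below -/
import Mathlib

section
/- Let C be an [n,k] rank metric code with k ≥ 1, let G be a generator matrix of C, and let U be the F-span of the columns of G in E^k. Then wt(C) ≤ dim_F(C) = mk, with equality if and only if U = E^k. Moreover, if wt(C) = dim_F(C), then wt(D) = dim_F(D) for every E-subspace D of C. -/
open Submodule Pointwise

/-- The coordinatewise inclusion of `F^n` into `E^n`. -/
noncomputable def fIncl (F E : Type*) [Field F] [Field E] [Algebra F E] (n : ℕ) :
    (Fin n → F) →ₗ[F] (Fin n → E) :=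
  LinearMap.compLeft (Algebra.linearMap F E) (Fin n)

/-- The rank support `χ(A)` of `A ⊆ E^n`: the smallest `F`-subspace `U` of `F^n`
such that `A` is contained in the `E`-span of (the image in `E^n` of) `U`. -/
noncomputable def rankSupport (F E : Type*) [Field F] [Field E] [Algebra F E] (n : ℕ)
    (A : Set (Fin n → E)) : Submodule F (Fin n → F) :=
  sInf {U : Submodule F (Fin n → F) |
    A ⊆ (Submodule.span E (fIncl F E n '' (U : Set (Fin n → F))) : Set (Fin n → E))}

/-- The rank support weight `wt(A) = dim_F χ(A)`. -/
noncomputable def wt (F E : Type*) [Field F] [Field E] [Algebra F E] (n : ℕ)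
    (A : Set (Fin n → E)) : ℕ :=
  Module.finrank F (rankSupport F E n A)

/-!
Fix a nonzero `F`-linear functional `f : E → F`; it makes `(a, b) ↦ f (a * b)` a nondegenerate form
on `E` and `(x, y) ↦ f (x ⬝ᵥ y)` one on `E^k`. Expanding scalars in a dual basis of the first form
shows that the rank support of an `E`-subspace `C` is exactly the image of `C` under `f` applied
coordinatewise. Hence `wt(C) = dim_F(C)` means that `f` is injective on `C`, a property inherited
by every subspace of `C`. The vectors `x` with `f` vanishing on `x ᵥ* G` form the orthogonal
complement of the columns of `G` under the second form, so rank-nullity gives `wt(C) = dim_F(U)`,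
to be compared with `dim_F(E^k) = dim_F(C)`.
-/

section ScharlauTransfer

variable {F E V : Type*} [CommSemiring F] [Field E] [Algebra F E]
  [AddCommMonoid V] [Module F V] [Module E V] [IsScalarTower F E V]

/-- The Scharlau transfer of an `E`-bilinear form `B` along a functional `f : E → F`: the
`F`-bilinear form `(x, y) ↦ f (B x y)`. It turns `E`-valued pairings into `F`-valued ones. -/
def scharlauTransfer (f : Module.Dual F E) (B : LinearMap.BilinForm E V) :
    LinearMap.BilinForm F V :=
  (B.restrictScalars₁₂ F F).compr₂ f

@[simp]
theorem scharlauTransfer_apply (f : Module.Dual F E) (B : LinearMap.BilinForm E V) (x y : V) :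
    scharlauTransfer f B x y = f (B x y) :=
  rfl

theorem eq_zero_of_forall_dual_mul_eq_zero {f : Module.Dual F E} (hf : f ≠ 0) {a : E}
    (h : ∀ e, f (e * a) = 0) : a = 0 := by
  by_contra ha
  exact hf (LinearMap.ext fun e => by simpa [ha] using h (e * a⁻¹))

theorem scharlauTransfer_nondegenerate {f : Module.Dual F E} (hf : f ≠ 0)
    {B : LinearMap.BilinForm E V} (hB : B.Nondegenerate) :
    (scharlauTransfer f B).Nondegenerate := by
  constructor
  · refine fun x hx => hB.1 x fun y => eq_zero_of_forall_dual_mul_eq_zero hf fun e => ?_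
    simpa using hx (e • y)
  · refine fun y hy => hB.2 y fun x => eq_zero_of_forall_dual_mul_eq_zero hf fun e => ?_
    simpa using hy (e • x)

end ScharlauTransfer

theorem mul_nondegenerate (R : Type*) [CommSemiring R] :
    (LinearMap.mul R R).Nondegenerate :=
  ⟨fun a ha => by simpa using ha 1, fun a ha => by simpa using ha 1⟩

theorem dotProductBilin_nondegenerate (R ι : Type*) [CommSemiring R] [Fintype ι] :
    (dotProductBilin R R : (ι → R) →ₗ[R] (ι → R) →ₗ[R] R).Nondegenerate :=
  ⟨fun _ hx => dotProduct_eq_zero_iff.1 hx,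
    fun _ hy => dotProduct_eq_zero_iff.1 fun x => (dotProduct_comm _ x).trans (hy x)⟩

theorem mem_orthogonal_span_iff {R M : Type*} [CommSemiring R] [AddCommMonoid M] [Module R M]
    {B : LinearMap.BilinForm R M} {s : Set M} {x : M} :
    x ∈ B.orthogonal (span R s) ↔ ∀ y ∈ s, B y x = 0 :=
  span_le (p := LinearMap.ker (B.flip x))

theorem injOn_iff_finrank_map_eq {K V W : Type*} [DivisionRing K] [AddCommGroup V] [Module K V]
    [AddCommGroup W] [Module K W] (g : V →ₗ[K] W) (S : Submodule K V) [FiniteDimensional K S] :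
    Set.InjOn g S ↔ Module.finrank K (S.map g) = Module.finrank K S := by
  have rank_nullity := (g.domRestrict S).finrank_range_add_finrank_ker
  rw [LinearMap.range_domRestrict] at rank_nullity
  calc
    Set.InjOn g S ↔ Function.Injective (g.domRestrict S) := Set.injOn_iff_injective
    _ ↔ Module.finrank K (LinearMap.ker (g.domRestrict S)) = 0 := by
      rw [finrank_eq_zero, LinearMap.ker_eq_bot]
    _ ↔ Module.finrank K (S.map g) = Module.finrank K S := by lia

section RankSupport

variable {F E : Type*} [Field F] [Field E] [Algebra F E] {n : ℕ}

theorem compLeft_smul_fIncl (f : Module.Dual F E) (a : E) (u : Fin n → F) :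
    f.compLeft (Fin n) (a • fIncl F E n u) = f a • u := by
  ext j
  simp [fIncl, mul_comm a, ← Algebra.smul_def, mul_comm (u j)]

theorem compLeft_mem_of_mem_span_fIncl (f : Module.Dual F E) {V : Submodule F (Fin n → F)}
    {x : Fin n → E} (hx : x ∈ span E (fIncl F E n '' (V : Set (Fin n → F)))) :
    f.compLeft (Fin n) x ∈ V := by
  induction hx using closure_induction with
  | zero => simp
  | add x y _ _ hx hy => simpa using V.add_mem hx hy
  | smul_mem a y hy =>
    obtain ⟨u, hu, rfl⟩ := hy
    rw [compLeft_smul_fIncl]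
    exact V.smul_mem _ hu

variable [FiniteDimensional F E] {f : Module.Dual F E}

theorem mem_span_fIncl_of_forall_compLeft_smul_mem (hf : f ≠ 0) {V : Submodule F (Fin n → F)}
    {x : Fin n → E} (hx : ∀ a : E, f.compLeft (Fin n) (a • x) ∈ V) :
    x ∈ span E (fIncl F E n '' (V : Set (Fin n → F))) := by
  let b := Module.finBasis F E
  have hB := scharlauTransfer_nondegenerate hf (mul_nondegenerate E)
  let b' := LinearMap.BilinForm.dualBasis _ hB b
  have expansion : x = ∑ i, b' i • fIncl F E n (f.compLeft (Fin n) (b i • x)) := by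
    ext j
    conv_lhs => rw [← b'.sum_repr (x j)]
    simp [b', fIncl, Algebra.smul_def, mul_comm]
  rw [expansion]
  exact sum_mem fun i _ => smul_mem _ _ (subset_span ⟨_, hx (b i), rfl⟩)

theorem subset_span_fIncl_iff (hf : f ≠ 0) (C : Submodule E (Fin n → E))
    (V : Submodule F (Fin n → F)) :
    (C : Set (Fin n → E)) ⊆ span E (fIncl F E n '' (V : Set (Fin n → F))) ↔
      (C.restrictScalars F).map (f.compLeft (Fin n)) ≤ V := by
  rw [map_le_iff_le_comap]
  exact ⟨fun h _ hx => compLeft_mem_of_mem_span_fIncl f (h hx), fun h _ hx =>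
    mem_span_fIncl_of_forall_compLeft_smul_mem hf fun a => h (C.smul_mem a hx)⟩

theorem rankSupport_eq_map_compLeft (hf : f ≠ 0) (C : Submodule E (Fin n → E)) :
    rankSupport F E n C = (C.restrictScalars F).map (f.compLeft (Fin n)) := by
  simp only [rankSupport, subset_span_fIncl_iff hf]
  exact csInf_Ici

theorem wt_eq_finrank_restrictScalars_iff_injOn (hf : f ≠ 0) (C : Submodule E (Fin n → E)) :
    wt F E n C = Module.finrank F (C.restrictScalars F) ↔
      Set.InjOn (f.compLeft (Fin n)) (C : Set (Fin n → E)) := by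
  rw [wt, rankSupport_eq_map_compLeft hf]
  exact (injOn_iff_finrank_map_eq _ (C.restrictScalars F)).symm

theorem wt_le_finrank_restrictScalars (C : Submodule E (Fin n → E)) :
    wt F E n C ≤ Module.finrank F (C.restrictScalars F) := by
  obtain ⟨f, hf⟩ := exists_ne (0 : Module.Dual F E)
  rw [wt, rankSupport_eq_map_compLeft hf]
  exact finrank_map_le _ _

theorem wt_eq_finrank_restrictScalars_of_le {C D : Submodule E (Fin n → E)} (hDC : D ≤ C)
    (hC : wt F E n C = Module.finrank F (C.restrictScalars F)) :
    wt F E n D = Module.finrank F (D.restrictScalars F) := by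
  obtain ⟨f, hf⟩ := exists_ne (0 : Module.Dual F E)
  rw [wt_eq_finrank_restrictScalars_iff_injOn hf] at hC ⊢
  exact hC.mono hDC

end RankSupport

section GeneratorMatrix

variable {F E ι : Type*} [Field F] [Field E] [Algebra F E]

theorem ker_compLeft_comp_vecMulLinear [Fintype ι] {κ : Type*} (f : Module.Dual F E)
    (G : Matrix ι κ E) :
    LinearMap.ker (f.compLeft κ ∘ₗ G.vecMulLinear.restrictScalars F) =
      (scharlauTransfer f (dotProductBilin E E)).orthogonal (span F (Set.range G.col)) := by
  ext x
  rw [mem_orthogonal_span_iff, LinearMap.mem_ker, funext_iff, Set.forall_mem_range]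
  refine forall_congr' fun j => ?_
  rw [scharlauTransfer_apply, dotProductBilin_apply_apply, dotProduct_comm]
  rfl

theorem wt_span_row_eq_finrank_span_col [FiniteDimensional F E] [Finite ι] {n : ℕ}
    (G : Matrix ι (Fin n) E) :
    wt F E n (span E (Set.range G.row)) = Module.finrank F (span F (Set.range G.col)) := by
  have := Fintype.ofFinite ι
  obtain ⟨f, hf⟩ := exists_ne (0 : Module.Dual F E)
  let g := f.compLeft (Fin n) ∘ₗ G.vecMulLinear.restrictScalars F
  let B : LinearMap.BilinForm F (ι → E) := scharlauTransfer f (dotProductBilin E E)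
  have hB : B.Nondegenerate :=
    scharlauTransfer_nondegenerate hf (dotProductBilin_nondegenerate E ι)
  have wt_eq : wt F E n (span E (Set.range G.row)) = Module.finrank F (LinearMap.range g) := by
    rw [wt, rankSupport_eq_map_compLeft hf, ← range_vecMulLinear, LinearMap.range_comp]
    rfl
  have rank_nullity := g.finrank_range_add_finrank_ker
  rw [ker_compLeft_comp_vecMulLinear, B.finrank_orthogonal hB] at rank_nullity
  have := finrank_le (span F (Set.range G.col))
  lia

end GeneratorMatrix

/-- Corollary 2.1: for an `[n,k]` code `C` with generator matrix `G` and `U` the `F`-span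
of the columns of `G`, one has `wt(C) ≤ dim_F(C) = mk`, with equality iff `U = E^k`;
moreover if `wt(C) = dim_F(C)` then `wt(D) = dim_F(D)` for every `E`-subspace `D ≤ C`. -/
theorem statement1 (F E : Type*) [Field F] [Field E] [Algebra F E]
    [FiniteDimensional F E] (m : ℕ) (hm : Module.finrank F E = m)
    (n k : ℕ) (hn : 0 < n) (hk : 1 ≤ k)
    (C : Submodule E (Fin n → E)) (hC : Module.finrank E C = k)
    (G : Fin k → Fin n → E) (hG : Submodule.span E (Set.range G) = C)
    (U : Submodule F (Fin k → E))
    (hU : U = Submodule.span F (Set.range fun j => fun i => G i j)) :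
    Module.finrank F (C.restrictScalars F) = m * k ∧
      wt F E n (C : Set (Fin n → E)) ≤ Module.finrank F (C.restrictScalars F) ∧
      (wt F E n (C : Set (Fin n → E)) = Module.finrank F (C.restrictScalars F) ↔ U = ⊤) ∧
      (wt F E n (C : Set (Fin n → E)) = Module.finrank F (C.restrictScalars F) →
        ∀ D : Submodule E (Fin n → E), D ≤ C →
          wt F E n (D : Set (Fin n → E)) = Module.finrank F (D.restrictScalars F)) := by
  have dim_C : Module.finrank F (C.restrictScalars F) = m * k := by
    rw [← hm, ← hC]
    exact (Module.finrank_mul_finrank F E C).symm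
  have dim_Ek : Module.finrank F (Fin k → E) = m * k := by
    rw [← hm, ← Module.finrank_mul_finrank F E, Module.finrank_fin_fun]
  have wt_C : wt F E n C = Module.finrank F U := by
    rw [← hG, hU]
    exact wt_span_row_eq_finrank_span_col (Matrix.of G)
  refine ⟨dim_C, wt_le_finrank_restrictScalars C, ?_,
    fun h D hDC => wt_eq_finrank_restrictScalars_of_le hDC h⟩
  rw [wt_C, dim_C, ← dim_Ek, eq_top_iff_finrank_eq]
end

section
/- Let P be a finite field with |P| = q, X a P-vector space with dim_P(X) = k, H ⊆ X with 0 ∈ H, and let w = |{a ∈ P∖{0} : aH = H}|, where aH = {ah : h ∈ H}. Then for any t ∈ {0,1,…,k} such that |H| ≤ w(q^{k+1−t}−1)/(q−1), there exists a P-subspace L of X with dim_P(L) = t and H ∩ L = {0}. -/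
/-!
Let `L` be maximal among the subspaces that avoid `A = H \ {0}`. Adjoining to `L` any `x ∉ L`
produces a subspace meeting `A`, so a nonzero multiple of some element of `A` is congruent to `x`
modulo `L`. Hence the union `B` of the sets `cA`, `c ≠ 0`, covers the nonzero elements of `X / L`,
and `q ^ (k - dim L) ≤ |B| + 1`.

On the other hand `cA` depends only on the class of `c` modulo the stabilizer of `A`, which contains
the `w` scalars fixing `H`. Thus `w |B| ≤ (q - 1) (|H| - 1)`, and the bound on `|H|` forces
`dim L ≥ t`.
-/

open Submodule Pointwise

section GroupAction

variable {G α : Type*} [Group G]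

theorem ncard_iUnion_smul_le_index_stabilizer_mul_ncard [MulAction G α] (A : Set α)
    [(MulAction.stabilizer G A).FiniteIndex] :
    (⋃ g : G, g • A).ncard ≤ (MulAction.stabilizer G A).index * A.ncard := by
  have : Finite (MulAction.orbit G A) :=
    .of_equiv _ (MulAction.orbitEquivQuotientStabilizer G A).symm
  have : Fintype (MulAction.orbit G A) := .ofFinite _
  have ncard_of_mem_orbit (B : MulAction.orbit G A) : (B : Set α).ncard = A.ncard := by
    obtain ⟨_, g, rfl⟩ := B
    exact Set.ncard_smul_set g A
  calc (⋃ g : G, g • A).ncard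
      = (⋃ B : MulAction.orbit G A, (B : Set α)).ncard := by
        rw [← Set.sUnion_eq_iUnion, MulAction.orbit, Set.sUnion_range]
    _ ≤ ∑ B : MulAction.orbit G A, (B : Set α).ncard := Set.ncard_iUnion_le_of_fintype _
    _ = (MulAction.stabilizer G A).index * A.ncard := by
        simp only [ncard_of_mem_orbit, Finset.sum_const, Finset.card_univ, smul_eq_mul,
          MulAction.index_stabilizer, ← Nat.card_coe_set_eq, Nat.card_eq_fintype_card]

theorem stabilizer_le_stabilizer_sdiff_zero [AddMonoid α] [DistribMulAction G α] (H : Set α) :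
    MulAction.stabilizer G H ≤ MulAction.stabilizer G (H \ {0}) := by
  intro g hg
  rw [MulAction.mem_stabilizer_iff] at hg ⊢
  rw [Set.smul_set_sdiff, hg, Set.smul_set_singleton, smul_zero]

end GroupAction

theorem card_stabilizer_units {M α : Type*} [GroupWithZero M] [MulAction M α] (A : Set α) :
    Nat.card (MulAction.stabilizer Mˣ A) = {a : M | a ≠ 0 ∧ a • A = A}.ncard := by
  have image_val :
      {a : M | a ≠ 0 ∧ a • A = A} = Units.val '' (MulAction.stabilizer Mˣ A : Set Mˣ) := by
    ext a
    constructor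
    · rintro ⟨ha, haA⟩
      exact ⟨Units.mk0 a ha, haA, rfl⟩
    · rintro ⟨u, hu, rfl⟩
      exact ⟨u.ne_zero, hu⟩
  rw [image_val, Set.ncard_image_of_injective _ Units.val_injective]
  rfl

theorem exists_submodule_le_finrank_eq {R M : Type*} [Ring R] [Nontrivial R] [StrongRankCondition R]
    [AddCommGroup M] [Module R M] (N : Submodule R M) {n : ℕ} (hn : n ≤ Module.finrank R N) :
    ∃ N' ≤ N, Module.finrank R N' = n := by
  obtain ⟨v, hv⟩ := exists_linearIndependent_of_le_finrank hn
  refine ⟨(span R (Set.range v)).map N.subtype, map_subtype_le _ _, ?_⟩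
  rw [finrank_map_subtype_eq, finrank_span_eq_card hv, Fintype.card_fin]

section VectorSpace

variable {K V : Type*} [DivisionRing K] [AddCommGroup V] [Module K V]

theorem ncard_iUnion_units_smul_mul_ncard_le [Finite K] (H : Set V) :
    (⋃ c : Kˣ, c • (H \ {0})).ncard * {a : K | a ≠ 0 ∧ a • H = H}.ncard ≤
      (Nat.card K - 1) * (H \ {0}).ncard := by
  set S := MulAction.stabilizer Kˣ (H \ {0})
  calc (⋃ c : Kˣ, c • (H \ {0})).ncard * {a : K | a ≠ 0 ∧ a • H = H}.ncard
      ≤ S.index * (H \ {0}).ncard * Nat.card S := by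
        rw [← card_stabilizer_units]
        gcongr
        · exact ncard_iUnion_smul_le_index_stabilizer_mul_ncard _
        · exact Subgroup.card_le_of_le (stabilizer_le_stabilizer_sdiff_zero H)
    _ = (Nat.card K - 1) * (H \ {0}).ncard := by
        rw [mul_right_comm, S.index_mul_card, Nat.card_units]

theorem exists_unit_smul_mem_of_mem_sup_span_singleton {L : Submodule K V} {x y : V}
    (hy : y ∈ L ⊔ span K {x}) (hyL : y ∉ L) : ∃ c : Kˣ, L.mkQ (c • y) = L.mkQ x := by
  obtain ⟨l, hl, _, hz, rfl⟩ := mem_sup.1 hy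
  obtain ⟨c, rfl⟩ := mem_span_singleton.1 hz
  have hc : c ≠ 0 := by
    rintro rfl
    exact hyL (by simpa using hl)
  refine ⟨(Units.mk0 c hc)⁻¹, ?_⟩
  simp [Units.smul_def, smul_smul, hc, (Submodule.Quotient.mk_eq_zero L).2 hl]

theorem compl_zero_subset_mkQ_image_of_maximal_disjoint {A : Set V} {L : Submodule K V}
    (hL : Maximal (fun L' : Submodule K V ↦ Disjoint A (L' : Set V)) L) :
    {0}ᶜ ⊆ L.mkQ '' ⋃ c : Kˣ, c • A := by
  intro y hy
  obtain ⟨x, rfl⟩ := L.mkQ_surjective y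
  have hxL : x ∉ L := fun hx ↦ hy ((Submodule.Quotient.mk_eq_zero L).2 hx)
  have not_disjoint : ¬ Disjoint A (L ⊔ span K {x} : Submodule K V) := fun h ↦
    hxL (hL.le_of_ge h le_sup_left (mem_sup_right (mem_span_singleton_self x)))
  obtain ⟨a, haA, ha⟩ := Set.not_disjoint_iff.1 not_disjoint
  obtain ⟨c, hc⟩ := exists_unit_smul_mem_of_mem_sup_span_singleton ha
    (Set.disjoint_left.1 hL.prop haA)
  exact ⟨c • a, Set.mem_iUnion.2 ⟨c, Set.smul_mem_smul_set haA⟩, hc⟩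

theorem card_quotient_le_of_maximal_disjoint [Finite V] {A : Set V} {L : Submodule K V}
    (hL : Maximal (fun L' : Submodule K V ↦ Disjoint A (L' : Set V)) L) :
    Nat.card (V ⧸ L) ≤ (⋃ c : Kˣ, c • A).ncard + 1 := by
  have : Finite (V ⧸ L) := Quotient.finite _
  have hle : ({0}ᶜ : Set (V ⧸ L)).ncard ≤ (⋃ c : Kˣ, c • A).ncard :=
    (Set.ncard_le_ncard (compl_zero_subset_mkQ_image_of_maximal_disjoint hL)).trans
      (Set.ncard_image_le (Set.toFinite _))
  rw [Set.ncard_compl, Set.ncard_singleton] at hle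
  lia

theorem exists_finrank_eq_disjoint_of_ncard_lt [Finite K] [Module.Finite K V] {A : Set V}
    (hA : 0 ∉ A) {t : ℕ}
    (hlt : (⋃ c : Kˣ, c • A).ncard + 1 < Nat.card K ^ (Module.finrank K V + 1 - t)) :
    ∃ L : Submodule K V, Module.finrank K L = t ∧ Disjoint A (L : Set V) := by
  have : Finite V := Module.finite_of_finite K
  obtain ⟨L, hL⟩ := exists_maximal_of_wellFoundedGT
    (fun L : Submodule K V ↦ Disjoint A (L : Set V)) ⟨⊥, by simpa using hA⟩
  have pow_lt_pow : Nat.card K ^ (Module.finrank K (V ⧸ L)) <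
      Nat.card K ^ (Module.finrank K V + 1 - t) := by
    rw [← Module.natCard_eq_pow_finrank]
    exact (card_quotient_le_of_maximal_disjoint hL).trans_lt hlt
  have le_finrank : t ≤ Module.finrank K L := by
    have := (Nat.pow_lt_pow_iff_right Finite.one_lt_card).1 pow_lt_pow
    have := L.finrank_quotient_add_finrank
    lia
  obtain ⟨L', hL'L, hL'⟩ := exists_submodule_le_finrank_eq L le_finrank
  exact ⟨L', hL', hL.prop.mono_right hL'L⟩

end VectorSpace

/-- Proposition 4.1: let `P` be a finite field with `q` elements, `X` a `k`-dimensional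
`P`-vector space, `0 ∈ H ⊆ X`, and `w = |{a ∈ P \ {0} : aH = H}|`. Then for any `t ≤ k`
with `|H| ≤ w(q^{k+1-t} - 1)/(q - 1)`, there is a `P`-subspace `L` with `dim_P L = t`
and `H ∩ L = {0}`. -/
theorem statement7 (P : Type*) [Field P] [Fintype P] (q : ℕ) (hq : Fintype.card P = q)
    (X : Type*) [AddCommGroup X] [Module P X] [Module.Finite P X]
    (k : ℕ) (hk : Module.finrank P X = k)
    (H : Set X) (h0 : (0 : X) ∈ H)
    (w : ℕ) (hw : w = Set.ncard {a : P | a ≠ 0 ∧ a • H = H})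
    (t : ℕ) (ht : t ≤ k)
    (hH : H.ncard * (q - 1) ≤ w * (q ^ (k + 1 - t) - 1)) :
    ∃ L : Submodule P X, Module.finrank P L = t ∧ H ∩ (L : Set X) = {0} := by
  have : Finite X := Module.finite_of_finite P
  have one_lt_q : 1 < q := hq ▸ Fintype.one_lt_card
  set B := ⋃ c : Pˣ, c • (H \ {0})
  have mul_lt_mul : w * B.ncard < w * (q ^ (k + 1 - t) - 1) :=
    calc w * B.ncard ≤ (q - 1) * (H \ {0}).ncard := by
          have := ncard_iUnion_units_smul_mul_ncard_le (K := P) H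
          rwa [← hw, Nat.card_eq_fintype_card, hq, mul_comm] at this
      _ < (q - 1) * H.ncard := by
          gcongr
          · lia
          · exact Set.ncard_sdiff_singleton_lt_of_mem h0
      _ ≤ w * (q ^ (k + 1 - t) - 1) := mul_comm (q - 1) _ ▸ hH
  have ncard_lt : B.ncard + 1 < Nat.card P ^ (Module.finrank P X + 1 - t) := by
    rw [Nat.card_eq_fintype_card, hq, hk]
    have := lt_of_mul_lt_mul_left' mul_lt_mul
    lia
  obtain ⟨L, hLt, hL⟩ := exists_finrank_eq_disjoint_of_ncard_lt (by simp) ncard_lt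
  refine ⟨L, hLt, ?_⟩
  rw [← Set.insert_sdiff_self_of_mem h0, Set.insert_inter_of_mem L.zero_mem,
    hL.inter_eq, insert_empty_eq]
end

section
/- Let Y be a k-dimensional E-vector space with k ≥ 1, let A be an F-subspace of Y, and let r ∈ {0,1,…,k−1}. Then the following are equivalent: (1) A is a cutting r-blocking set of Y; (2) for every E-subspace W of Y with dim_E(W) = k−r−1, dim_F(A + W) ≥ (k−1)m + 1; (3) A is (k−r−1, dim_F(A) − mr − 1)-evasive in Y. -/
open Submodule Pointwise

/-- `S` is a cutting `r`-blocking set of `L`: for every submodule `V` of codimension `r`,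
the span of `S ∩ V` is all of `V`. -/
def IsCuttingBlocking (R : Type*) {L : Type*} [DivisionRing R] [AddCommGroup L] [Module R L]
    (S : Set L) (r : ℕ) : Prop :=
  ∀ V : Submodule R L, Module.finrank R V = Module.finrank R L - r →
    Submodule.span R (S ∩ (V : Set L)) = V

/-- `J` is `(h, r)`-evasive in the `E`-vector space `X`. -/
def IsEvasive (F E : Type*) {X : Type*} [Field F] [Field E] [Algebra F E]
    [AddCommGroup X] [Module E X] [Module F X] [IsScalarTower F E X]
    (J : Submodule F X) (h : ℕ) (r : ℤ) : Prop :=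
  Submodule.span E (J : Set X) = ⊤ ∧
    ∀ M : Submodule E X, Module.finrank E M = h →
      (Module.finrank F ↥(J ⊓ M.restrictScalars F) : ℤ) ≤ r

/-!
Everything rests on one fact: if an `F`-subspace `U` of `Y` has codimension at least `m`, then some
vector `y` has no nonzero `E`-multiple in `U`. If `dim_F(A + W) ≤ (k-1)m`, applying it to
`U = A + W` gives a line whose sum with `W` meets `A` only inside `W`, so `A` is not cutting.
Conversely, if `A ∩ V` lies in an `E`-hyperplane `W` of `V`, then `A ∩ W = A ∩ V`, and comparing
dimensions gives `dim_F(A + W) + m = dim_F(A + V) ≤ km`.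

The fact is an instance of a statement about a linear family `T y : E → Y/U` of `F`-linear maps such
that `y ↦ T y e` is onto for every `e ≠ 0`: some `T y` is injective. Over a finite field the kernels
of the maps `y ↦ T y e` are too few to cover `Y`. Over an infinite field a member whose kernel has
least dimension is injective, since otherwise a generic perturbation would have a smaller kernel.
-/

section LinearAlgebra

open Module

theorem exists_submodule_between_finrank_eq {D V : Type*} [DivisionRing D] [AddCommGroup V]
    [Module D V] [FiniteDimensional D V] {P Q : Submodule D V} (hPQ : P ≤ Q) {d : ℕ}
    (hPd : finrank D P ≤ d) (hdQ : d ≤ finrank D Q) :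
    ∃ W : Submodule D V, P ≤ W ∧ W ≤ Q ∧ finrank D W = d := by
  induction d, hPd using Nat.le_induction with
  | base => exact ⟨P, le_rfl, hPQ, rfl⟩
  | succ n _ ih =>
    obtain ⟨W, hPW, hWQ, hW⟩ := ih (by lia)
    have hQW : ¬ Q ≤ W := fun h => by
      have := Submodule.finrank_mono h
      lia
    obtain ⟨x, hxQ, hxW⟩ := SetLike.not_le_iff_exists.mp hQW
    refine ⟨W ⊔ Submodule.span D {x}, hPW.trans le_sup_left,
      sup_le hWQ ((Submodule.span_singleton_le_iff_mem x Q).mpr hxQ), ?_⟩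
    rw [Submodule.finrank_sup_span_singleton hxW, hW]

theorem exists_forall_apply_ne_zero_of_card_lt {ι Y G : Type*} [Finite ι] [AddGroup Y] [AddGroup G]
    (f : ι → Y →+ G) (hf : ∀ i, Function.Surjective (f i)) (hcard : Nat.card ι < Nat.card G) :
    ∃ y, ∀ i, f i y ≠ 0 := by
  by_contra! hcover
  have := Fintype.ofFinite ι
  have hker : ⋃ i ∈ Finset.univ, (0 : Y) +ᵥ ((f i).ker : Set Y) = Set.univ := by
    refine Set.eq_univ_of_forall fun y => ?_
    obtain ⟨i, hi⟩ := hcover y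
    simp only [zero_vadd]
    exact Set.mem_biUnion (Finset.mem_univ i) hi
  obtain ⟨i, -, -, hindex⟩ := AddSubgroup.exists_index_le_card_of_leftCoset_cover hker
  rw [AddSubgroup.index_ker, AddMonoidHom.range_eq_top.mpr (hf i), AddSubgroup.card_top,
    Finset.card_univ, ← Nat.card_eq_fintype_card] at hindex
  exact hindex.not_gt hcard

variable {K X Y G : Type*} [Field K] [AddCommGroup X] [Module K X] [AddCommGroup G]
  [Module K G]

theorem injective_coprod_toSpanSingleton {f : X →ₗ[K] G} (hf : Function.Injective f) {w : G}
    (hw : w ∉ f.range) : Function.Injective (f.coprod (LinearMap.toSpanSingleton K G w)) := by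
  have hw0 : w ≠ 0 := fun h => hw (h ▸ zero_mem _)
  have hdisjoint : Disjoint f.range (LinearMap.toSpanSingleton K G w).range := by
    rw [LinearMap.range_toSpanSingleton]
    exact Submodule.disjoint_span_singleton_of_notMem hw
  rw [← LinearMap.ker_eq_bot, LinearMap.ker_coprod_of_disjoint_range _ _ hdisjoint,
    LinearMap.ker_eq_bot.mpr hf, LinearMap.ker_toSpanSingleton K hw0, Submodule.prod_bot]

variable [FiniteDimensional K X]

theorem finite_setOf_not_injective_add_smul {f : X →ₗ[K] G} (hf : Function.Injective f)
    (g : X →ₗ[K] G) : {t : K | ¬ Function.Injective (f + t • g)}.Finite := by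
  obtain ⟨p, hp⟩ := f.exists_leftInverse_of_injective (LinearMap.ker_eq_bot.mpr hf)
  have hinj : Function.Injective fun t : K => -t⁻¹ := neg_injective.comp inv_injective
  refine ((End.finite_hasEigenvalue (p ∘ₗ g)).preimage hinj.injOn).subset fun t ht => ?_
  obtain ⟨x, hx, hx0⟩ : ∃ x, f x + t • g x = 0 ∧ x ≠ 0 := by
    simpa [injective_iff_map_eq_zero] using ht
  have hpx : x + t • p (g x) = 0 := by
    simpa [show p (f x) = x from LinearMap.congr_fun hp x] using congrArg p hx
  have ht0 : t ≠ 0 := by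
    rintro rfl
    exact hx0 (by simpa using hpx)
  have heigen : (p ∘ₗ g) x = -t⁻¹ • x := by
    rw [LinearMap.comp_apply, neg_smul, eq_neg_iff_add_eq_zero, ← smul_right_inj ht0, smul_add,
      smul_inv_smul₀ ht0, add_comm, hpx, smul_zero]
  exact End.hasEigenvalue_of_hasEigenvector
    (End.hasEigenvector_iff.mpr ⟨End.mem_eigenspace_iff.mpr heigen, hx0⟩)

theorem exists_finrank_ker_add_smul_lt [Infinite K] {f g : X →ₗ[K] G} {x : X}
    (hfx : f x = 0) (hgx : g x ∉ f.range) :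
    ∃ t : K, finrank K (f + t • g).ker < finrank K f.ker := by
  obtain ⟨C, hC⟩ := Submodule.exists_isCompl f.ker
  let f' : C × K →ₗ[K] G := (f.domRestrict C).coprod (LinearMap.toSpanSingleton K G (g x))
  let g' : C × K →ₗ[K] G := g.domRestrict C ∘ₗ LinearMap.fst K C K
  have hf' : Function.Injective f' := injective_coprod_toSpanSingleton
    (LinearMap.injective_domRestrict_iff.mpr hC.disjoint.symm)
    fun h => hgx (f.range_domRestrict_le_range C h)
  obtain ⟨t, ht⟩ :=
    ((finite_setOf_not_injective_add_smul hf' g').union (Set.finite_singleton 0)).exists_notMem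
  obtain ⟨ht0, hinj⟩ : t ≠ 0 ∧ Function.Injective (f' + t • g') := by simpa using ht
  -- On `C ⊕ Kx`, the map `f + t • g` is `f' + t • g'` with the second coordinate scaled by `t`.
  have hrange : (f' + t • g').range ≤ (f + t • g).range := by
    rintro _ ⟨⟨c, s⟩, rfl⟩
    refine ⟨c + (s * t⁻¹) • x, ?_⟩
    simp only [f', g', LinearMap.add_apply, LinearMap.smul_apply, LinearMap.comp_apply,
      LinearMap.coprod_apply, LinearMap.domRestrict_apply, LinearMap.toSpanSingleton_apply,
      LinearMap.fst_apply, map_add, map_smul, hfx, smul_zero, smul_add, smul_smul,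
      inv_mul_cancel_right₀ ht0]
    abel
  have hdim := Submodule.finrank_mono hrange
  rw [LinearMap.finrank_range_of_inj hinj, finrank_prod, finrank_self] at hdim
  have hC_add := Submodule.finrank_add_eq_of_isCompl hC
  have hrank_nullity := LinearMap.finrank_range_add_finrank_ker (f + t • g)
  exact ⟨t, by lia⟩

variable [AddCommGroup Y] [Module K Y] (T : Y →ₗ[K] X →ₗ[K] G)

theorem exists_injective_of_forall_surjective_of_infinite [Infinite K]
    (hT : ∀ x ≠ 0, Function.Surjective (T.flip x))
    (hdim : finrank K X ≤ finrank K G) : ∃ y, Function.Injective (T y) := by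
  let nullity : Y → ℕ := fun y => finrank K (T y).ker
  let y := Function.argmin nullity
  refine ⟨y, (injective_iff_map_eq_zero (T y)).mpr fun x hx => ?_⟩
  by_contra hx0
  have hker : 0 < finrank K (T y).ker :=
    finrank_pos_iff_exists_ne_zero.mpr ⟨⟨x, hx⟩, fun h => hx0 (congrArg Subtype.val h)⟩
  have hrange : (T y).range ≠ ⊤ := fun htop => by
    have := LinearMap.finrank_range_add_finrank_ker (T y)
    rw [htop, finrank_top] at this
    lia
  obtain ⟨w, hw⟩ : ∃ w, w ∉ (T y).range := by
    simpa [Submodule.eq_top_iff'] using hrange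
  obtain ⟨z, rfl⟩ := hT x hx0 w
  obtain ⟨t, ht⟩ := exists_finrank_ker_add_smul_lt hx hw
  rw [← map_smul, ← map_add] at ht
  exact Function.not_lt_argmin nullity _ ht

theorem exists_injective_of_forall_surjective_of_finite [Finite K] [FiniteDimensional K G]
    (hT : ∀ x ≠ 0, Function.Surjective (T.flip x))
    (hdim : finrank K X ≤ finrank K G) : ∃ y, Function.Injective (T y) := by
  have : Finite X := finite_of_finite K
  have hcard : Nat.card {x : X // x ≠ 0} < Nat.card G := calc
    Nat.card {x : X // x ≠ 0} < Nat.card X := Finite.card_subtype_lt (x := 0) (by simp)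
    _ ≤ Nat.card G := by
      rw [natCard_eq_pow_finrank (K := K) (V := X), natCard_eq_pow_finrank (K := K) (V := G)]
      exact Nat.pow_le_pow_right Nat.card_pos hdim
  obtain ⟨y, hy⟩ := exists_forall_apply_ne_zero_of_card_lt
    (fun x : {x : X // x ≠ 0} => (T.flip x).toAddMonoidHom) (fun x => hT x x.2) hcard
  exact ⟨y, (injective_iff_map_eq_zero (T y)).mpr fun x hx => by_contra fun hx0 => hy ⟨x, hx0⟩ hx⟩

theorem exists_injective_of_forall_surjective [FiniteDimensional K G]
    (hT : ∀ x ≠ 0, Function.Surjective (T.flip x))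
    (hdim : finrank K X ≤ finrank K G) : ∃ y, Function.Injective (T y) := by
  cases finite_or_infinite K with
  | inl _ => exact exists_injective_of_forall_surjective_of_finite T hT hdim
  | inr _ => exact exists_injective_of_forall_surjective_of_infinite T hT hdim

end LinearAlgebra

section CuttingBlocking

open Module

theorem IsCuttingBlocking.span_eq_top {D L : Type*} [DivisionRing D] [AddCommGroup L] [Module D L]
    [FiniteDimensional D L] {S : Set L} {r : ℕ}
    (hS : IsCuttingBlocking D S r) (hr : r < finrank D L) : Submodule.span D S = ⊤ := by
  refine eq_top_iff.mpr fun x _ => ?_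
  have hx : finrank D (Submodule.span D {x}) ≤ 1 := by
    simpa using finrank_span_le_card (R := D) {x}
  have htop : finrank D (⊤ : Submodule D L) = finrank D L := finrank_top D L
  obtain ⟨V, hxV, -, hV⟩ := exists_submodule_between_finrank_eq (P := Submodule.span D {x}) le_top
    (d := finrank D L - r) (by lia) (by lia)
  have hxS : x ∈ Submodule.span D (S ∩ V) := by
    rw [hS V hV]
    exact (Submodule.span_singleton_le_iff_mem x V).mp hxV
  exact Submodule.span_mono Set.inter_subset_left hxS

variable {F E Y : Type*} [Field F] [DivisionRing E] [Algebra F E] [AddCommGroup Y] [Module E Y]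
  [Module F Y] [IsScalarTower F E Y]

theorem exists_forall_smul_mem_imp_eq_zero [FiniteDimensional F E] (U : Submodule F Y)
    (hU : finrank F E ≤ finrank F (Y ⧸ U)) : ∃ y : Y, ∀ e : E, e • y ∈ U → e = 0 := by
  have : FiniteDimensional F (Y ⧸ U) := .of_finrank_pos (finrank_pos.trans_le hU)
  let T : Y →ₗ[F] E →ₗ[F] Y ⧸ U := (Algebra.lsmul F F Y).toLinearMap.flip.compr₂ U.mkQ
  have hT : ∀ e ≠ 0, Function.Surjective (T.flip e) := fun e he w => by
    obtain ⟨w, rfl⟩ := U.mkQ_surjective w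
    exact ⟨e⁻¹ • w, by simp [T, smul_inv_smul₀ he]⟩
  obtain ⟨y, hy⟩ := exists_injective_of_forall_surjective T hT hU
  refine ⟨y, fun e he => (injective_iff_map_eq_zero (T y)).mp hy e ?_⟩
  simpa [T] using he

theorem span_inter_sup_span_singleton_le {A : Submodule F Y} {W : Submodule E Y} {y : Y}
    (hy : ∀ e : E, e • y ∈ A ⊔ W.restrictScalars F → e = 0) :
    Submodule.span E ((A : Set Y) ∩ ↑(W ⊔ Submodule.span E {y})) ≤ W := by
  rw [Submodule.span_le]
  rintro a ⟨haA, haV⟩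
  obtain ⟨w, hw, z, hz, rfl⟩ := Submodule.mem_sup.mp haV
  obtain ⟨e, rfl⟩ := Submodule.mem_span_singleton.mp hz
  have hey : e • y ∈ A ⊔ W.restrictScalars F := by
    rw [← add_sub_cancel_left w (e • y)]
    exact Submodule.sub_mem _ (Submodule.mem_sup_left haA) (Submodule.mem_sup_right hw)
  simpa [hy e hey] using hw

variable [FiniteDimensional F E] [FiniteDimensional E Y]

theorem finrank_sup_add_finrank_inf_restrictScalars (A : Submodule F Y) (W : Submodule E Y) :
    finrank F ↥(A ⊔ W.restrictScalars F) + finrank F ↥(A ⊓ W.restrictScalars F) =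
      finrank F A + finrank F E * finrank E W := by
  have : FiniteDimensional F Y := FiniteDimensional.trans F E Y
  rw [Submodule.finrank_sup_add_finrank_inf_eq, finrank_mul_finrank F E W]
  rfl

variable {A : Submodule F Y} {r j : ℕ}

theorem IsCuttingBlocking.lt_finrank_sup (hA : IsCuttingBlocking E (A : Set Y) r)
    (hrj : r + j + 1 = finrank E Y) {W : Submodule E Y} (hW : finrank E W = j) :
    (r + j) * finrank F E < finrank F ↥(A ⊔ W.restrictScalars F) := by
  have : FiniteDimensional F Y := FiniteDimensional.trans F E Y
  by_contra! hle
  have hcodim : finrank F E ≤ finrank F (Y ⧸ A ⊔ W.restrictScalars F) := by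
    have := (A ⊔ W.restrictScalars F).finrank_quotient_add_finrank
    rw [← finrank_mul_finrank F E Y, ← hrj] at this
    linarith
  obtain ⟨y, hy⟩ := exists_forall_smul_mem_imp_eq_zero _ hcodim
  have hyW : y ∉ W := fun hyW => one_ne_zero <| hy 1 <| by
    rw [one_smul]
    exact Submodule.mem_sup_right hyW
  have hspan : Submodule.span E ((A : Set Y) ∩ ↑(W ⊔ Submodule.span E {y})) =
      W ⊔ Submodule.span E {y} :=
    hA _ (by rw [Submodule.finrank_sup_span_singleton hyW, hW]; lia)
  have hyV : y ∈ W ⊔ Submodule.span E {y} :=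
    Submodule.mem_sup_right (Submodule.mem_span_singleton_self y)
  exact hyW (span_inter_sup_span_singleton_le hy (hspan.symm ▸ hyV))

theorem isCuttingBlocking_of_forall_lt_finrank_sup (hrj : r + j + 1 = finrank E Y)
    (hA : ∀ W : Submodule E Y, finrank E W = j →
      (r + j) * finrank F E < finrank F ↥(A ⊔ W.restrictScalars F)) :
    IsCuttingBlocking E (A : Set Y) r := by
  have : FiniteDimensional F Y := FiniteDimensional.trans F E Y
  intro V hV
  have hle : Submodule.span E ((A : Set Y) ∩ V) ≤ V := Submodule.span_le.mpr Set.inter_subset_right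
  by_contra hne
  have hlt := Submodule.finrank_lt_finrank_of_lt (lt_of_le_of_ne hle hne)
  obtain ⟨W, hAW, hWV, hW⟩ := exists_submodule_between_finrank_eq hle (d := j) (by lia) (by lia)
  have hinf : A ⊓ W.restrictScalars F = A ⊓ V.restrictScalars F :=
    le_antisymm (inf_le_inf_left A hWV) fun x hx => ⟨hx.1, hAW (Submodule.subset_span hx)⟩
  have hsupW := finrank_sup_add_finrank_inf_restrictScalars A W
  have hsupV := finrank_sup_add_finrank_inf_restrictScalars A V
  have hsupV_le := (A ⊔ V.restrictScalars F).finrank_le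
  have hV_eq : finrank E V = j + 1 := by lia
  rw [hinf, hW] at hsupW
  rw [hV_eq] at hsupV
  rw [← finrank_mul_finrank F E Y, ← hrj] at hsupV_le
  linarith [hA W hW]

theorem isCuttingBlocking_iff_forall_lt_finrank_sup (hrj : r + j + 1 = finrank E Y) :
    IsCuttingBlocking E (A : Set Y) r ↔ ∀ W : Submodule E Y, finrank E W = j →
      (r + j) * finrank F E < finrank F ↥(A ⊔ W.restrictScalars F) :=
  ⟨fun hA _ hW => hA.lt_finrank_sup hrj hW, isCuttingBlocking_of_forall_lt_finrank_sup hrj⟩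

theorem lt_finrank_sup_iff_finrank_inf_le {W : Submodule E Y} (hW : finrank E W = j) :
    (r + j) * finrank F E < finrank F ↥(A ⊔ W.restrictScalars F) ↔
      (finrank F ↥(A ⊓ W.restrictScalars F) : ℤ) ≤ finrank F A - finrank F E * r - 1 := by
  have hsup := finrank_sup_add_finrank_inf_restrictScalars A W
  rw [hW] at hsup
  zify at hsup ⊢
  constructor <;> intro h <;> linarith

theorem isCuttingBlocking_iff_isEvasive {F E Y : Type*} [Field F] [Field E] [Algebra F E]
    [FiniteDimensional F E] [AddCommGroup Y] [Module E Y] [Module F Y] [IsScalarTower F E Y]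
    [FiniteDimensional E Y] {A : Submodule F Y} {r j : ℕ} (hrj : r + j + 1 = finrank E Y) :
    IsCuttingBlocking E (A : Set Y) r ↔ IsEvasive F E A j (finrank F A - finrank F E * r - 1) := by
  have hcut_iff : IsCuttingBlocking E (A : Set Y) r ↔ ∀ M : Submodule E Y, finrank E M = j →
      (finrank F ↥(A ⊓ M.restrictScalars F) : ℤ) ≤ finrank F A - finrank F E * r - 1 :=
    (isCuttingBlocking_iff_forall_lt_finrank_sup hrj).trans
      (forall₂_congr fun _ hM => lt_finrank_sup_iff_finrank_inf_le hM)
  exact ⟨fun hA => ⟨hA.span_eq_top (by lia), hcut_iff.mp hA⟩, fun hA => hcut_iff.mpr hA.2⟩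

end CuttingBlocking

/-- Theorem 4.2: for an `F`-subspace `A` of a `k`-dimensional `E`-vector space `Y` and
`r ∈ {0, …, k-1}`, the following are equivalent: (1) `A` is a cutting `r`-blocking set of
`Y`; (2) `dim_F(A + W) ≥ (k-1)m + 1` for every `E`-subspace `W` with `dim_E W = k-r-1`;
(3) `A` is `(k-r-1, dim_F(A) - mr - 1)`-evasive in `Y`. -/
theorem statement8 (F E : Type*) [Field F] [Field E] [Algebra F E]
    [FiniteDimensional F E] (m : ℕ) (hm : Module.finrank F E = m)
    (Y : Type*) [AddCommGroup Y] [Module E Y] [Module F Y] [IsScalarTower F E Y]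
    [FiniteDimensional E Y] (k : ℕ) (hY : Module.finrank E Y = k)
    (A : Submodule F Y) (r : ℕ) (hr : r + 1 ≤ k) :
    (IsCuttingBlocking E (A : Set Y) r ↔
      ∀ W : Submodule E Y, Module.finrank E W = k - r - 1 →
        (k - 1) * m + 1 ≤ Module.finrank F ↥(A ⊔ W.restrictScalars F)) ∧
    (IsCuttingBlocking E (A : Set Y) r ↔
      IsEvasive F E A (k - r - 1) ((Module.finrank F A : ℤ) - (m : ℤ) * (r : ℤ) - 1)) := by
  subst hm hY
  obtain ⟨j, hj⟩ : ∃ j, r + j + 1 = Module.finrank E Y := ⟨Module.finrank E Y - r - 1, by lia⟩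
  have hdimW : Module.finrank E Y - r - 1 = j := by lia
  have hdimH : Module.finrank E Y - 1 = r + j := by lia
  rw [hdimW, hdimH]
  exact ⟨isCuttingBlocking_iff_forall_lt_finrank_sup hj, isCuttingBlocking_iff_isEvasive hj⟩
end
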